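/- For every τ ∈ ℍ with E2(τ) ≠ 0, the function p is complex differentiable at τ and its derivative equals p'(τ) = E4(τ)/E2(τ)². -/

import Mathlib

/-!
The claim is equivalent to Ramanujan's identity `D E₂ = (E₂² - E₄) / 12`, where `D = (2πi)⁻¹ d/dτ`:
differentiating `p = τ - 6i / (π E₂)` gives `p' = 1 + 6i E₂' / (π E₂²) = 1 - (E₂² - E₄) / E₂²`.

Differentiating the quasi-modular law `E₂|₂γ = E₂ - (3 / π²) D₂(γ)` shows that the anomalous terms
of `E₂²` and `12 D E₂` cancel, so `E₂² - 12 D E₂` is invariant of weight `4` under `SL(2, ℤ)`. At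
the cusp `E₂` and `E₄` tend to `1`, while `D E₂` tends to `0` by Cauchy's estimate on discs of
radius `Im τ / 2`. Thus `E₂² - 12 D E₂ - E₄` is a cusp form of level one and weight `4 < 12`,
hence zero.
-/

/-- `q = exp(2πiτ)`. -/
noncomputable def qexp (τ : ℂ) : ℂ := Complex.exp (2 * Real.pi * Complex.I * τ)

/-- Divisor power sum `σ_k(n) = ∑_{d | n} d^k`, as a complex number. -/
noncomputable def sigmaC (k n : ℕ) : ℂ := ∑ d ∈ Nat.divisors n, (d : ℂ) ^ k

/-- Eisenstein series `E₂`. -/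
noncomputable def E2 (τ : ℂ) : ℂ := 1 - 24 * ∑' n : ℕ, sigmaC 1 (n + 1) * qexp τ ^ (n + 1)

/-- Eisenstein series `E₄`. -/
noncomputable def E4 (τ : ℂ) : ℂ := 1 + 240 * ∑' n : ℕ, sigmaC 3 (n + 1) * qexp τ ^ (n + 1)

/-- Eisenstein series `E₆`. -/
noncomputable def E6 (τ : ℂ) : ℂ := 1 - 504 * ∑' n : ℕ, sigmaC 5 (n + 1) * qexp τ ^ (n + 1)

/-- The discriminant form `Δ = (E₄³ - E₆²)/1728`. -/
noncomputable def Δfun (τ : ℂ) : ℂ := (E4 τ ^ 3 - E6 τ ^ 2) / 1728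

/-- The ratio of quasi-periods `p(τ) = τ - 6i/(π E₂(τ))`. -/
noncomputable def pfun (τ : ℂ) : ℂ := τ - 6 * Complex.I / (Real.pi * E2 τ)

open UpperHalfPlane hiding I
open Complex Filter Topology ModularForm Derivative Function
open EisensteinSeries (D2)
open scoped Manifold MatrixGroups Real

section CuspBehaviour

variable {f : ℍ → ℂ}

lemma tendsto_atImInfty_of_hasSum_qExpansion {c : ℕ → ℂ} {h : ℝ} (hh : 0 < h)
    (hf : ∀ τ : ℍ, HasSum (fun m ↦ c m • Periodic.qParam h τ ^ m) (f τ)) :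
    Tendsto f atImInfty (𝓝 (c 0)) := by
  have hsum (τ : ℍ) : HasSum (fun m ↦ c (m + 1) • Periodic.qParam h τ ^ m)
      ((Periodic.qParam h τ)⁻¹ * (f τ - c 0)) := by
    have hq : Periodic.qParam h τ ≠ 0 := Periodic.qParam_ne_zero _
    have htail := ((hasSum_nat_add_iff' 1).mpr (hf τ)).mul_left (Periodic.qParam h τ)⁻¹
    simp only [Finset.sum_range_one, pow_zero, smul_eq_mul, mul_one] at htail
    refine htail.congr_fun fun m ↦ ?_
    simp only [smul_eq_mul]
    field_simp
    ring
  have hbdd := (isBoundedAtImInfty_of_hasSum_qExpansion hh hsum).isBoundedUnder_le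
  have hzero := (qParam_tendsto_atImInfty hh).zero_mul_isBoundedUnder_le hbdd
  refine tendsto_sub_nhds_zero_iff.mp (hzero.congr fun τ ↦ ?_)
  exact mul_inv_cancel_left₀ (Periodic.qParam_ne_zero _) _

lemma norm_normalizedDeriv_le (hf : MDiff f) {z : ℍ} {M : ℝ}
    (hM : ∀ w : ℍ, z.im / 2 ≤ w.im → ‖f w‖ ≤ M) : ‖D f z‖ ≤ M / (π * z.im) := by
  have him {w : ℂ} (hw : w ∈ Metric.closedBall (z : ℂ) (z.im / 2)) : z.im / 2 ≤ w.im := by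
    have := (abs_im_le_norm (w - z)).trans (mem_closedBall_iff_norm.mp hw)
    rw [sub_im, coe_im] at this
    linarith [(abs_le.mp this).1]
  have hpos {w : ℂ} (hw : w ∈ Metric.closedBall (z : ℂ) (z.im / 2)) : 0 < w.im :=
    (half_pos z.im_pos).trans_le (him hw)
  have hcauchy : ‖deriv (f ∘ ofComplex) z‖ ≤ M / (z.im / 2) := by
    refine norm_deriv_le_of_forall_mem_sphere_norm_le (half_pos z.im_pos) ?_ fun w hw ↦ ?_
    · exact ((UpperHalfPlane.mdifferentiable_iff.mp hf).mono fun w hw ↦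
        hpos (Metric.closure_ball_subset_closedBall hw)).diffContOnCl
    · have hw := Metric.sphere_subset_closedBall hw
      rw [comp_apply, ofComplex_apply_of_im_pos (hpos hw)]
      exact hM _ (him hw)
  calc ‖D f z‖ = (2 * π)⁻¹ * ‖deriv (f ∘ ofComplex) z‖ := by
        simp [normalizedDerivOfComplex, abs_of_pos Real.pi_pos]
    _ ≤ (2 * π)⁻¹ * (M / (z.im / 2)) := by gcongr
    _ = M / (π * z.im) := by field_simp

lemma isZeroAtImInfty_normalizedDeriv (hf : MDiff f) (hbdd : IsBoundedAtImInfty f) :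
    IsZeroAtImInfty (D f) := by
  obtain ⟨M, A, hM⟩ := isBoundedAtImInfty_iff.mp hbdd
  have him : Tendsto UpperHalfPlane.im atImInfty atTop := tendsto_comap
  refine squeeze_zero_norm' ?_ ((him.const_mul_atTop Real.pi_pos).const_div_atTop M)
  filter_upwards [him.eventually_ge_atTop (2 * A)] with z hz
  exact norm_normalizedDeriv_le hf fun w hw ↦ hM w (by linarith)

lemma eq_zero_of_slash_eq_of_isZeroAtImInfty {k : ℤ} (hk : k < 12) (hf : MDiff f)
    (hslash : ∀ γ : SL(2, ℤ), f ∣[k] γ = f) (hzero : IsZeroAtImInfty f) : f = 0 := by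
  let F : CuspForm 𝒮ℒ k :=
    { toFun := f
      slash_action_eq' := by
        rintro _ ⟨γ, rfl⟩
        exact hslash γ
      holo' := hf
      zero_at_cusps' := fun hc ↦ by
        rw [Subgroup.IsArithmetic.isCusp_iff_isCusp_SL2Z] at hc
        rw [OnePoint.isZeroAt_iff_forall_SL2Z hc]
        exact fun γ _ ↦ (hslash γ).symm ▸ hzero }
  have hF : F = 0 := rank_zero_iff_forall_zero.mp (CuspForm.rank_eq_zero_of_weight_lt_twelve hk) F
  exact congrArg DFunLike.coe hF

end CuspBehaviour

section QuasiModular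

lemma D2_mdifferentiable (γ : SL(2, ℤ)) : MDiff (D2 γ) :=
  mdifferentiable_const.mul (mdifferentiable_inv_denom γ)

lemma normalizedDeriv_D2 (γ : SL(2, ℤ)) : D (D2 γ) = (4 * π ^ 2 : ℂ)⁻¹ • D2 γ ^ 2 := by
  ext z
  have hderiv : HasDerivAt (D2 γ ∘ ofComplex)
      (2 * π * I * γ 1 0 * (-γ 1 0 / denom γ z ^ 2)) z := by
    have hdenom := (hasDerivAt_denom_zpow γ (-1) z).const_mul (2 * π * I * γ 1 0 : ℂ)
    refine (hdenom.congr_of_eventuallyEq ?_).congr_deriv ?_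
    · filter_upwards [isOpen_upperHalfPlaneSet.mem_nhds z.im_pos] with w hw
      simp [D2, ofComplex_apply_of_im_pos hw, div_eq_mul_inv]
    · simp [show (-1 - 1 : ℤ) = -2 from rfl, zpow_neg, div_eq_mul_inv]
  have hz := denom_ne_zero γ z
  simp only [normalizedDerivOfComplex, hderiv.deriv, Pi.smul_apply, Pi.pow_apply, D2, smul_eq_mul]
  field_simp
  linear_combination -4 * (γ 1 0 : ℂ) ^ 2 * I_sq

lemma normalizedDeriv_slash_of_slash_eq_sub_smul_D2 {f : ℍ → ℂ} (hf : MDiff f) {k : ℤ} {a : ℂ}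
    {γ : SL(2, ℤ)} (h : f ∣[k] γ = f - a • D2 γ) :
    D f ∣[k + 2] γ = D f - (4 * π ^ 2 : ℂ)⁻¹ • (k • (D2 γ * f) - ((k - 1) * a : ℂ) • D2 γ ^ 2) := by
  have hslash := normalizedDerivOfComplex_SL_slash (k := k) hf (γ := γ)
  rw [h, normalizedDerivOfComplex_sub _ _ hf ((D2_mdifferentiable γ).const_smul a),
    normalizedDerivOfComplex_smul _ _ (D2_mdifferentiable γ), normalizedDeriv_D2] at hslash
  ext z
  have hD2 : (2 * π * I : ℂ)⁻¹ * (γ 1 0 / denom γ z) = -((4 * π ^ 2 : ℂ)⁻¹ * D2 γ z) := by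
    have hz := denom_ne_zero γ z
    simp only [D2]
    field_simp
    linear_combination 4 * (γ 1 0 : ℂ) * I_sq
  have hz := congrFun hslash z
  simp only [Pi.sub_apply, Pi.smul_apply, Pi.pow_apply, Pi.mul_apply, smul_eq_mul, zsmul_eq_mul,
    mul_assoc (k : ℂ), hD2] at hz ⊢
  linear_combination -hz

lemma sq_sub_normalizedDeriv_slash_four {f : ℍ → ℂ} (hf : MDiff f) {a : ℂ} {γ : SL(2, ℤ)}
    (h : f ∣[(2 : ℤ)] γ = f - a • D2 γ) :
    (f ^ 2 - (4 * π ^ 2 * a) • D f) ∣[(4 : ℤ)] γ = f ^ 2 - (4 * π ^ 2 * a) • D f := by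
  have hsq : (f ^ 2) ∣[(2 + 2 : ℤ)] γ = (f - a • D2 γ) ^ 2 := by
    rw [sq, sq, ← h]
    exact mul_slash_SL2 2 2 γ f f
  rw [show (4 : ℤ) = 2 + 2 from rfl, sub_eq_add_neg, SlashAction.add_slash, SlashAction.neg_slash,
    SL_smul_slash, hsq, normalizedDeriv_slash_of_slash_eq_sub_smul_D2 hf h]
  ext z
  simp only [Pi.add_apply, Pi.sub_apply, Pi.neg_apply, Pi.smul_apply, Pi.pow_apply, Pi.mul_apply,
    smul_eq_mul]
  field_simp
  ring

end QuasiModular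

section Ramanujan

lemma tendsto_E2_atImInfty : Tendsto EisensteinSeries.E2 atImInfty (𝓝 1) := by
  refine tendsto_atImInfty_of_hasSum_qExpansion one_pos
    (c := fun m ↦ if m = 0 then 1 else -24 * ArithmeticFunction.sigma 1 m) fun τ ↦ ?_
  simpa only [Periodic.qParam, ofReal_one, div_one] using
    EisensteinSeries.hasSum_qExpansion_E2 (z := τ)

lemma tendsto_E_atImInfty {k : ℕ} (hk : 3 ≤ k) (hk2 : Even k) :
    Tendsto (E hk) atImInfty (𝓝 1) := by
  rw [← EisensteinSeries.E_qExpansion_coeff_zero hk hk2]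
  exact tendsto_atImInfty_of_hasSum_qExpansion one_pos
    (ModularForm.hasSum_qExpansion (E hk) one_pos one_mem_strictPeriods_SL)

lemma E2_sq_sub_normalizedDeriv_slash_four (γ : SL(2, ℤ)) :
    (EisensteinSeries.E2 ^ 2 - (12 : ℂ) • D EisensteinSeries.E2) ∣[(4 : ℤ)] γ =
      EisensteinSeries.E2 ^ 2 - (12 : ℂ) • D EisensteinSeries.E2 := by
  have h12 : 4 * π ^ 2 * (1 / (2 * riemannZeta 2)) = 12 := by
    rw [riemannZeta_two]
    field_simp
    norm_num
  rw [← h12]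
  exact sq_sub_normalizedDeriv_slash_four E2_mdifferentiable (EisensteinSeries.E2_slash_action γ)

lemma E2_sq_sub_normalizedDeriv_eq_E₄ :
    EisensteinSeries.E2 ^ 2 - (12 : ℂ) • D EisensteinSeries.E2 = E₄ := by
  refine sub_eq_zero.mp (eq_zero_of_slash_eq_of_isZeroAtImInfty (k := 4) (by norm_num) ?_ ?_ ?_)
  · exact ((E2_mdifferentiable.pow 2).sub
      ((normalizedDerivOfComplex_mdifferentiable E2_mdifferentiable).const_smul 12)).sub
      (ModularFormClass.holo E₄)
  · intro γ
    have hE₄ : (E₄ : ℍ → ℂ) ∣[(4 : ℤ)] γ = E₄ :=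
      SlashInvariantFormClass.slash_action_eq E₄ _ ⟨γ, rfl⟩
    rw [sub_eq_add_neg, SlashAction.add_slash, SlashAction.neg_slash, hE₄,
      E2_sq_sub_normalizedDeriv_slash_four]
  · have hD : Tendsto (D EisensteinSeries.E2) atImInfty (𝓝 0) :=
      isZeroAtImInfty_normalizedDeriv E2_mdifferentiable EisensteinSeries.isBoundedAtImInfty_E2
    have hE₄ := tendsto_E_atImInfty (k := 4) (by norm_num) ⟨2, rfl⟩
    simpa using! ((tendsto_E2_atImInfty.pow 2).sub (hD.const_smul (12 : ℂ))).sub hE₄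

end Ramanujan

lemma sigmaC_eq_sigma (k n : ℕ) : sigmaC k n = ArithmeticFunction.sigma k n := by
  simp [sigmaC, ArithmeticFunction.sigma_apply]

lemma E2_eq_eisensteinSeries_E2 (z : ℍ) : E2 z = EisensteinSeries.E2 z := by
  rw [EisensteinSeries.E2_eq_tsum_cexp, tsum_pnat_eq_tsum_succ
    (f := fun n ↦ (ArithmeticFunction.sigma 1 n : ℂ) * cexp (2 * π * I * z) ^ n)]
  simp only [E2, sigmaC_eq_sigma, qexp]

lemma E4_eq_E₄ (z : ℍ) : E4 z = E₄ z := by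
  have hbernoulli : bernoulli 4 = -1 / 30 := by
    rw [bernoulli_eq_bernoulli'_of_ne_one (by norm_num), bernoulli'_four]
  have hE₄ := EisensteinSeries.q_expansion_bernoulli (by norm_num : 3 ≤ 4) ⟨2, rfl⟩ z
  simp_rw [zpow_natCast] at hE₄
  rw [hE₄, hbernoulli, tsum_pnat_eq_tsum_succ
    (f := fun n ↦ (ArithmeticFunction.sigma (4 - 1) n : ℂ) * cexp (2 * π * I * z) ^ n)]
  simp only [E4, sigmaC_eq_sigma, qexp]
  norm_num

lemma hasDerivAt_E2 {τ : ℂ} (hτ : 0 < τ.im) :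
    HasDerivAt E2 (2 * π * I / 12 * (E2 τ ^ 2 - E4 τ)) τ := by
  have hderiv := (UpperHalfPlane.mdifferentiableAt_iff.mp (E2_mdifferentiable ⟨τ, hτ⟩)).hasDerivAt
  refine (hderiv.congr_of_eventuallyEq ?_).congr_deriv ?_
  · filter_upwards [isOpen_upperHalfPlaneSet.mem_nhds hτ] with w hw
    rw [comp_apply, ofComplex_apply_of_im_pos hw]
    exact E2_eq_eisensteinSeries_E2 ⟨w, hw⟩
  · have hE₄ := congrFun E2_sq_sub_normalizedDeriv_eq_E₄ ⟨τ, hτ⟩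
    simp only [Pi.sub_apply, Pi.pow_apply, Pi.smul_apply, smul_eq_mul, normalizedDerivOfComplex,
      ← E2_eq_eisensteinSeries_E2, ← E4_eq_E₄] at hE₄
    rw [← hE₄]
    field_simp
    ring

/-- Wherever `E₂(τ) ≠ 0`, the function `p` is complex differentiable with
`p'(τ) = E₄(τ)/E₂(τ)²`. -/
theorem p_derivative (τ : ℂ) (hτ : 0 < τ.im) (hE : E2 τ ≠ 0) :
    HasDerivAt pfun (E4 τ / E2 τ ^ 2) τ := by
  have hpi : (π : ℂ) ≠ 0 := ofReal_ne_zero.mpr Real.pi_ne_zero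
  have hp := (hasDerivAt_id τ).sub ((hasDerivAt_const τ (6 * I)).div
    ((hasDerivAt_E2 hτ).const_mul (π : ℂ)) (mul_ne_zero hpi hE))
  refine hp.congr_deriv ?_
  field_simp
  linear_combination 12 * π * (E2 τ ^ 2 - E4 τ) * I_sq
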